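/- Let m > N ≥ 2 be integers, set α = (m−N)/(N−1), and let R > 0. Let H be a Finsler norm on ℝ^m with polar H⁰ and let K be a Finsler norm on ℝ^N with polar K⁰; set κ_m = Lebesgue measure of { x ∈ ℝ^m : H⁰(x) < 1 }, κ_N = Lebesgue measure of { y ∈ ℝ^N : K⁰(y) < 1 }, ω_{m−1} = m κ_m, ω_{N−1} = N κ_N, and W^N_R = { y ∈ ℝ^N : K⁰(y) < R }. Let W ∈ C¹((0, R)), define the K⁰-radial function w(y) = W(K⁰(y)) on W^N_R ∖ {0} and the H⁰-radial function u(x) = U(H⁰(x)) on ℝ^m ∖ {0}, where U(r) = W( R·exp(−r^{−α}) ) for r > 0. Assume the four integrals below are finite. Then I(u) = (ω_{m−1}/ω_{N−1}) · ((m−N)/(N−1))^{N−1} · J(w), where I(u) = ∫_{ℝ^m} |∇u(x) · x/H⁰(x)|^N dx − ((m−N)/N)^N ∫_{ℝ^m} |u(x)|^N / H⁰(x)^N dx and J(w) = ∫_{W^N_R} |∇w(y) · y/K⁰(y)|^N dy − ((N−1)/N)^N ∫_{W^N_R} |w(y)|^N / ( K⁰(y)^N (log(R/K⁰(y)))^N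 ) dy. -/

import Mathlib

open MeasureTheory Set Filter
open scoped RealInnerProductSpace Topology ENNReal NNReal

noncomputable section

/-- `ℝ^N` as a Euclidean space. -/
abbrev Euc (N : ℕ) := EuclideanSpace ℝ (Fin N)

/-- `H : ℝ^N → ℝ` is a Finsler norm: nonnegative, convex, `C²` away from the origin,
even and positively one-homogeneous, comparable to the Euclidean norm, and with
positive definite Hessian of `H²` away from the origin. -/
structure IsFinslerNorm {N : ℕ} (H : Euc N → ℝ) : Prop where
  nonneg : ∀ ξ, 0 ≤ H ξ
  convexOn : ConvexOn ℝ Set.univ H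
  smooth : ContDiffOn ℝ 2 H {(0 : Euc N)}ᶜ
  homog : ∀ (t : ℝ) (ξ : Euc N), H (t • ξ) = |t| * H ξ
  bounds : ∃ a b : ℝ, 0 < a ∧ a ≤ b ∧ ∀ ξ : Euc N, a * ‖ξ‖ ≤ H ξ ∧ H ξ ≤ b * ‖ξ‖
  hessPosDef : ∀ ξ : Euc N, ξ ≠ 0 → ∀ v : Euc N, v ≠ 0 →
    0 < iteratedFDeriv ℝ 2 (fun x => (H x) ^ 2) ξ ![v, v]

/-- The polar function `H⁰(x) = sup_{ξ ≠ 0} (ξ·x)/H(ξ)` of a Finsler norm. -/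
def polarNorm {N : ℕ} (H : Euc N → ℝ) (x : Euc N) : ℝ :=
  sSup {r : ℝ | ∃ ξ : Euc N, ξ ≠ 0 ∧ r = ⟪ξ, x⟫ / H ξ}

/-- `u ∈ C_c^∞(Ω)`: a smooth function with compact support contained in `Ω`. -/
def IsTestFun {N : ℕ} (Ω : Set (Euc N)) (u : Euc N → ℝ) : Prop :=
  ContDiff ℝ (⊤ : ℕ∞) u ∧ HasCompactSupport u ∧ tsupport u ⊆ Ω

/-!
A gauge on an `n`-dimensional space pushes Haar measure forward to a multiple of `r ^ (n - 1) dr`,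
and by Euler's identity the derivative of `x ↦ V (g x)` in the direction `x / g x` is `V' (g x)`
wherever the gauge `g` is differentiable. A polar norm is Lipschitz, so by Rademacher's theorem this
is almost everywhere, and all four integrals become one-dimensional. The substitution
`s = R * exp (-r ^ (-α))` satisfies `ds/dr = α * s * r ^ (-α - 1)` and `log (R / s) = r ^ (-α)`.
Since `(α + 1) * (N - 1) = m - 1`, the powers of `r` cancel, leaving a factor `α ^ (N - 1)` in the
gradient term and `α⁻¹` in the Hardy term; the two constants agree because
`((m - N) / N) ^ N * α⁻¹ = α ^ (N - 1) * ((N - 1) / N) ^ N`.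
-/

section HasIntegralRatio

variable {X Y Z : Type*} [MeasurableSpace X] [MeasurableSpace Y] [MeasurableSpace Z]
  {μ : Measure X} {ν : Measure Y} {ρ : Measure Z}
  {f : X → ℝ} {g : Y → ℝ} {h : Z → ℝ} {c d : ℝ}

/-- The integral of `f` against `μ` is `c` times the integral of `g` against `ν`. Since the Bochner
integral of a non-integrable function is `0`, the relation also records that `f` and `g` are
integrable simultaneously. -/
structure HasIntegralRatio (c : ℝ) (f : X → ℝ) (μ : Measure X) (g : Y → ℝ) (ν : Measure Y) :
    Prop where
  integrable_iff : Integrable f μ ↔ Integrable g ν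
  integral_eq : ∫ x, f x ∂μ = c * ∫ y, g y ∂ν

theorem HasIntegralRatio.trans (hfg : HasIntegralRatio c f μ g ν)
    (hgh : HasIntegralRatio d g ν h ρ) : HasIntegralRatio (c * d) f μ h ρ where
  integrable_iff := hfg.integrable_iff.trans hgh.integrable_iff
  integral_eq := by rw [hfg.integral_eq, hgh.integral_eq, mul_assoc]

theorem HasIntegralRatio.symm (hfg : HasIntegralRatio c f μ g ν) (hc : c ≠ 0) :
    HasIntegralRatio c⁻¹ g ν f μ where
  integrable_iff := hfg.integrable_iff.symm
  integral_eq := by rw [hfg.integral_eq, inv_mul_cancel_left₀ hc]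

theorem hasIntegralRatio_of_ae_eq_mul {f' : X → ℝ} (hc : c ≠ 0)
    (hf : f =ᵐ[μ] fun x => c * f' x) : HasIntegralRatio c f μ f' μ where
  integrable_iff := (integrable_congr hf).trans (integrable_const_mul_iff hc.isUnit f')
  integral_eq := by rw [integral_congr_ae hf, integral_const_mul]

end HasIntegralRatio

theorem lintegral_Ioo_zero_pow (k : ℕ) {r : ℝ} (hr : 0 ≤ r) :
    ∫⁻ x in Ioo 0 r, ENNReal.ofReal (x ^ k) = ENNReal.ofReal (r ^ (k + 1) / (k + 1)) := by
  have hint : IntegrableOn (fun x : ℝ => x ^ k) (Ioo 0 r) :=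
    (continuous_pow k).integrableOn_Icc.mono_set Ioo_subset_Icc_self
  have hnonneg : 0 ≤ᵐ[volume.restrict (Ioo 0 r)] fun x : ℝ => x ^ k :=
    (ae_restrict_mem measurableSet_Ioo).mono fun x hx => pow_nonneg hx.1.le k
  rw [← ofReal_integral_eq_lintegral_ofReal hint hnonneg, ← integral_Ioc_eq_integral_Ioo,
    ← intervalIntegral.integral_of_le hr, integral_pow]
  simp

theorem measure_ext_of_Iio {μ ν : Measure ℝ} (hμ : ∀ r, μ (Iio r) ≠ ∞)
    (h : ∀ r, μ (Iio r) = ν (Iio r)) : μ = ν := by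
  refine Measure.ext_of_generateFrom_of_iUnion (range Iio) (fun n : ℕ => Iio (n : ℝ))
    (BorelSpace.measurable_eq.trans (borel_eq_generateFrom_Iio ℝ)) isPiSystem_Iio ?_
    (fun n => mem_range_self _) (fun n => hμ n) ?_
  · exact iUnion_eq_univ_iff.2 exists_nat_gt
  · rintro _ ⟨r, rfl⟩
    exact h r

theorem fderiv_apply_self_of_posHomogeneous {E F : Type*} [NormedAddCommGroup E] [NormedSpace ℝ E]
    [NormedAddCommGroup F] [NormedSpace ℝ F] {f : E → F} {x : E}
    (hf : ∀ t : ℝ, 0 < t → f (t • x) = t • f x) (hd : DifferentiableAt ℝ f x) :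
    fderiv ℝ f x x = f x := by
  have hray : HasDerivAt (fun t : ℝ => t • x) x 1 := by
    simpa only [one_smul, id_eq] using (hasDerivAt_id (1 : ℝ)).smul_const x
  have hcomp : HasDerivAt (fun t : ℝ => f (t • x)) (fderiv ℝ f x x) 1 :=
    HasFDerivAt.comp_hasDerivAt (f := fun t : ℝ => t • x) 1
      (by simpa only [one_smul] using hd.hasFDerivAt) hray
  have hlin : HasDerivAt (fun t : ℝ => t • f x) (f x) 1 := by
    simpa only [one_smul, id_eq] using (hasDerivAt_id (1 : ℝ)).smul_const (f x)
  refine hcomp.unique (hlin.congr_of_eventuallyEq ?_)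
  filter_upwards [lt_mem_nhds zero_lt_one] with t ht using hf t ht

/-- A gauge: a continuous function, positive off the origin and positively homogeneous of degree
one. Neither symmetry nor convexity is required. It plays the role of the polar norms `H⁰` and
`K⁰`. -/
structure IsGauge {E : Type*} [NormedAddCommGroup E] [NormedSpace ℝ E] (g : E → ℝ) : Prop where
  pos : ∀ x, x ≠ 0 → 0 < g x
  map_smul : ∀ (t : ℝ) (x : E), 0 < t → g (t • x) = t * g x
  continuous : Continuous g

namespace IsGauge

open Module

variable {E : Type*} [NormedAddCommGroup E] [NormedSpace ℝ E] {g : E → ℝ}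

theorem map_zero (hg : IsGauge g) : g 0 = 0 := by
  have h := hg.map_smul 2 0 two_pos
  rw [smul_zero] at h
  linarith

theorem nonneg (hg : IsGauge g) (x : E) : 0 ≤ g x := by
  rcases eq_or_ne x 0 with rfl | hx
  · exact hg.map_zero.ge
  · exact (hg.pos x hx).le

theorem exists_mul_norm_le [FiniteDimensional ℝ E] (hg : IsGauge g) :
    ∃ c > 0, ∀ x, c * ‖x‖ ≤ g x := by
  obtain ⟨c, hc, hle⟩ := (isCompact_sphere (0 : E) 1).exists_forall_le' hg.continuous.continuousOn
    fun x hx => hg.pos x (ne_zero_of_mem_unit_sphere ⟨x, hx⟩)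
  refine ⟨c, hc, fun x => ?_⟩
  rcases eq_or_ne x 0 with rfl | hx
  · simp [hg.map_zero]
  have hx' : 0 < ‖x‖ := norm_pos_iff.2 hx
  have hunit := hle (‖x‖⁻¹ • x) (by simp [norm_smul, hx'.ne'])
  rwa [hg.map_smul _ _ (inv_pos.2 hx'), ← div_eq_inv_mul, le_div_iff₀ hx'] at hunit

theorem fderiv_radial (hg : IsGauge g) {V : ℝ → ℝ} {v : E → ℝ}
    (hv : ∀ x, x ≠ 0 → v x = V (g x)) {x : E} (hx : x ≠ 0)
    (hd : DifferentiableAt ℝ g x) (hV : DifferentiableAt ℝ V (g x)) :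
    fderiv ℝ v x ((g x)⁻¹ • x) = deriv V (g x) := by
  have hev : v =ᶠ[𝓝 x] V ∘ g := (isOpen_ne.eventually_mem hx).mono hv
  have hvd : HasFDerivAt v (deriv V (g x) • fderiv ℝ g x) x :=
    (hV.hasDerivAt.comp_hasFDerivAt x hd.hasFDerivAt).congr_of_eventuallyEq hev
  have heuler : fderiv ℝ g x x = g x :=
    fderiv_apply_self_of_posHomogeneous (fun t ht => hg.map_smul t x ht) hd
  rw [hvd.fderiv, smul_apply, _root_.map_smul, heuler, smul_eq_mul, smul_eq_mul,
    inv_mul_cancel₀ (hg.pos x hx).ne', mul_one]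

section Integration

variable [MeasurableSpace E] (μ : Measure E) [μ.IsAddHaarMeasure]

theorem measure_lt_one_ne_zero (hg : IsGauge g) : μ {x | g x < 1} ≠ 0 := by
  have hopen : IsOpen {x | g x < 1} := isOpen_lt hg.continuous continuous_const
  exact (hopen.measure_pos μ ⟨0, by simp [hg.map_zero]⟩).ne'

variable [FiniteDimensional ℝ E]

theorem measure_lt_one_ne_top (hg : IsGauge g) : μ {x | g x < 1} ≠ ∞ := by
  obtain ⟨c, hc, hle⟩ := hg.exists_mul_norm_le
  refine ((Metric.isBounded_closedBall (x := (0 : E)) (r := c⁻¹)).subset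
    fun x (hx : g x < 1) => ?_).measure_lt_top.ne
  rw [mem_closedBall_zero_iff, ← one_div, le_div_iff₀' hc]
  exact (hle x).trans hx.le

theorem measureReal_lt_one_ne_zero (hg : IsGauge g) : μ.real {x | g x < 1} ≠ 0 :=
  ENNReal.toReal_ne_zero.2 ⟨hg.measure_lt_one_ne_zero μ, hg.measure_lt_one_ne_top μ⟩

variable [BorelSpace E]

theorem measure_lt (hg : IsGauge g) {r : ℝ} (hr : 0 < r) :
    μ {x | g x < r} = ENNReal.ofReal (r ^ finrank ℝ E) * μ {x | g x < 1} := by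
  have hscale : {x | g x < r} = (r⁻¹ • ·) ⁻¹' {x | g x < 1} := by
    ext x
    simp only [mem_ofPred_eq, mem_preimage]
    rw [hg.map_smul _ _ (inv_pos.2 hr), inv_mul_lt_one₀ hr]
  rw [hscale, Measure.addHaar_preimage_smul μ (inv_ne_zero hr.ne'), inv_pow, inv_inv,
    abs_of_pos (pow_pos hr _)]

theorem map_eq_withDensity [Nontrivial E] (hg : IsGauge g) :
    μ.map g = (finrank ℝ E * μ {x | g x < 1}) •
      (volume.restrict (Ioi 0)).withDensity fun r => ENNReal.ofReal (r ^ (finrank ℝ E - 1)) := by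
  have hmap : ∀ r, μ.map g (Iio r) = μ {x | g x < r} := fun r =>
    Measure.map_apply hg.continuous.measurable measurableSet_Iio
  have hneg : ∀ r ≤ 0, {x | g x < r} = ∅ := fun r hr =>
    eq_empty_of_forall_notMem fun x hx => (hr.trans (hg.nonneg x)).not_gt hx
  refine measure_ext_of_Iio (fun r => ?_) fun r => ?_ <;> rw [hmap] <;>
    rcases le_or_gt r 0 with hr | hr
  · simp [hneg r hr]
  · rw [hg.measure_lt μ hr]
    exact ENNReal.mul_ne_top ENNReal.ofReal_ne_top (hg.measure_lt_one_ne_top μ)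
  · rw [hneg r hr, Measure.smul_apply, withDensity_apply _ measurableSet_Iio,
      Measure.restrict_restrict measurableSet_Iio, Iio_inter_Ioi, Ioo_eq_empty hr.not_gt]
    simp
  · obtain ⟨k, hk⟩ : ∃ k, finrank ℝ E = k + 1 :=
      Nat.exists_eq_add_one_of_ne_zero finrank_pos.ne'
    have hpow : ENNReal.ofReal (r ^ (k + 1)) =
        (k + 1 : ℕ) * ENNReal.ofReal (r ^ (k + 1) / (k + 1)) := by
      rw [← ENNReal.ofReal_natCast, ← ENNReal.ofReal_mul (Nat.cast_nonneg _)]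
      push_cast
      congr 1
      field_simp
    rw [hg.measure_lt μ hr, Measure.smul_apply, withDensity_apply _ measurableSet_Iio,
      Measure.restrict_restrict measurableSet_Iio, Iio_inter_Ioi, hk, Nat.add_sub_cancel,
      lintegral_Ioo_zero_pow k hr.le, hpow, smul_eq_mul, mul_right_comm]

theorem map_restrict_preimage_eq_withDensity [Nontrivial E] (hg : IsGauge g) {s : Set ℝ}
    (hs : MeasurableSet s) :
    (μ.restrict (g ⁻¹' s)).map g = (finrank ℝ E * μ {x | g x < 1}) •
      (volume.restrict (s ∩ Ioi 0)).withDensity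
        fun r => ENNReal.ofReal (r ^ (finrank ℝ E - 1)) := by
  rw [← Measure.restrict_map hg.continuous.measurable hs, hg.map_eq_withDensity μ,
    Measure.restrict_smul, restrict_withDensity hs, Measure.restrict_restrict hs]

theorem hasIntegralRatio_of_ae_eq_comp [Nontrivial E] (hg : IsGauge g) {s : Set ℝ}
    (hs : MeasurableSet s) {F : E → ℝ} {f : ℝ → ℝ}
    (hf : AEStronglyMeasurable f (volume.restrict (s ∩ Ioi 0)))
    (hF : F =ᵐ[μ.restrict (g ⁻¹' s)] f ∘ g) :
    HasIntegralRatio (finrank ℝ E * μ.real {x | g x < 1}) F (μ.restrict (g ⁻¹' s))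
      (fun r => r ^ (finrank ℝ E - 1) * f r) (volume.restrict (s ∩ Ioi 0)) := by
  set c : ℝ≥0∞ := finrank ℝ E * μ {x | g x < 1} with hc
  set ρ : ℝ → ℝ≥0∞ := fun r => ENNReal.ofReal (r ^ (finrank ℝ E - 1)) with hρ
  have hc0 : c ≠ 0 :=
    mul_ne_zero (Nat.cast_ne_zero.2 finrank_pos.ne') (hg.measure_lt_one_ne_zero μ)
  have hctop : c ≠ ∞ := ENNReal.mul_ne_top (ENNReal.natCast_ne_top _) (hg.measure_lt_one_ne_top μ)
  have hρm : Measurable ρ := by fun_prop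
  have hρtop : ∀ᵐ r ∂volume.restrict (s ∩ Ioi 0), ρ r < ∞ :=
    ae_of_all _ fun r => ENNReal.ofReal_lt_top
  have hmap : (μ.restrict (g ⁻¹' s)).map g =
      c • (volume.restrict (s ∩ Ioi 0)).withDensity ρ :=
    hg.map_restrict_preimage_eq_withDensity μ hs
  have hfmap : AEStronglyMeasurable f ((μ.restrict (g ⁻¹' s)).map g) := by
    rw [hmap]
    exact (hf.mono_ac (withDensity_absolutelyContinuous _ ρ)).smul_measure c
  have hgm : AEMeasurable g (μ.restrict (g ⁻¹' s)) := hg.continuous.aemeasurable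
  have hdens : (fun r => (ρ r).toReal • f r) =ᵐ[volume.restrict (s ∩ Ioi 0)]
      fun r => r ^ (finrank ℝ E - 1) * f r := by
    filter_upwards [ae_restrict_of_ae_restrict_of_subset inter_subset_right
      (ae_restrict_mem measurableSet_Ioi)] with r (hr : 0 < r)
    rw [hρ, ENNReal.toReal_ofReal (by positivity), smul_eq_mul]
  constructor
  · rw [integrable_congr hF, ← integrable_map_measure hfmap hgm, hmap,
      integrable_smul_measure hc0 hctop, integrable_withDensity_iff_integrable_smul' hρm hρtop,
      integrable_congr hdens]
  · rw [integral_congr_ae hF]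
    simp only [Function.comp_apply]
    rw [← integral_map hgm hfmap, hmap, integral_smul_measure,
      integral_withDensity_eq_integral_toReal_smul hρm hρtop, integral_congr_ae hdens, hc,
      ENNReal.toReal_mul, ENNReal.toReal_natCast, smul_eq_mul, measureReal_def]

theorem hasIntegralRatio_abs_fderiv_radial_pow [Nontrivial E] (hg : IsGauge g)
    (hd : ∀ᵐ x ∂μ, DifferentiableAt ℝ g x) {s : Set ℝ} (hs : MeasurableSet s) {V : ℝ → ℝ}
    (hV : ∀ r ∈ s ∩ Ioi 0, DifferentiableAt ℝ V r) {v : E → ℝ}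
    (hv : ∀ x, x ≠ 0 → v x = V (g x)) (p : ℕ) :
    HasIntegralRatio (finrank ℝ E * μ.real {x | g x < 1})
      (fun x => |fderiv ℝ v x ((g x)⁻¹ • x)| ^ p) (μ.restrict (g ⁻¹' s))
      (fun r => r ^ (finrank ℝ E - 1) * |deriv V r| ^ p) (volume.restrict (s ∩ Ioi 0)) := by
  refine hg.hasIntegralRatio_of_ae_eq_comp μ hs (f := fun r => |deriv V r| ^ p)
    ((measurable_deriv V).norm.pow_const p).aestronglyMeasurable ?_
  filter_upwards [ae_restrict_of_ae hd, ae_restrict_of_ae (Measure.ae_ne μ 0),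
    ae_restrict_mem (hg.continuous.measurable hs)] with x hdx hx hxs
  rw [hg.fderiv_radial hv hx hdx (hV _ ⟨hxs, hg.pos x hx⟩), Function.comp_apply]

end Integration

end IsGauge

section RadialSubst

/-- The radial substitution `s = R * exp (-r ^ (-α))`. For `0 < R` and `0 < α` it is an increasing
bijection from `(0, ∞)` onto `(0, R)`. -/
def radialSubst (R α r : ℝ) : ℝ := R * Real.exp (-(r ^ (-α)))

variable {R α : ℝ}

theorem radialSubst_pos (hR : 0 < R) (r : ℝ) : 0 < radialSubst R α r :=
  mul_pos hR (Real.exp_pos _)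

theorem radialSubst_mem_Ioo (hR : 0 < R) {r : ℝ} (hr : 0 < r) : radialSubst R α r ∈ Ioo 0 R := by
  refine ⟨radialSubst_pos hR r, mul_lt_of_lt_one_right hR ?_⟩
  rw [Real.exp_lt_one_iff, neg_neg_iff_pos]
  exact Real.rpow_pos_of_pos hr _

theorem log_div_radialSubst (hR : R ≠ 0) (r : ℝ) :
    Real.log (R / radialSubst R α r) = r ^ (-α) := by
  rw [radialSubst, div_mul_cancel_left₀ hR, Real.exp_neg, inv_inv, Real.log_exp]

theorem hasDerivAt_radialSubst {r : ℝ} (hr : r ≠ 0) :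
    HasDerivAt (radialSubst R α) (radialSubst R α r * (α * r ^ (-α - 1))) r := by
  have h := (((Real.hasDerivAt_rpow_const (p := -α) (Or.inl hr)).neg).exp).const_mul R
  refine HasDerivAt.congr_deriv (f := radialSubst R α) h ?_
  simp only [radialSubst, Pi.neg_apply]
  ring

theorem injOn_radialSubst (hR : R ≠ 0) (hα : α ≠ 0) : InjOn (radialSubst R α) (Ioi 0) := by
  intro r (hr : 0 < r) s (hs : 0 < s) h
  refine (Real.rpow_left_inj hr.le hs.le (neg_ne_zero.2 hα)).1 ?_
  rw [← log_div_radialSubst hR r, ← log_div_radialSubst hR s, h]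

theorem image_radialSubst (hR : 0 < R) (hα : α ≠ 0) : radialSubst R α '' Ioi 0 = Ioo 0 R := by
  apply Subset.antisymm
  · rintro _ ⟨r, hr, rfl⟩
    exact radialSubst_mem_Ioo hR hr
  · rintro s ⟨hs, hsR⟩
    have hlog : 0 < Real.log (R / s) := Real.log_pos ((one_lt_div hs).2 hsR)
    refine ⟨Real.log (R / s) ^ (-α)⁻¹, Real.rpow_pos_of_pos hlog _, ?_⟩
    rw [radialSubst, Real.rpow_inv_rpow hlog.le (neg_ne_zero.2 hα), Real.exp_neg,
      Real.exp_log (div_pos hR hs), inv_div, mul_div_cancel₀ _ hR.ne']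

theorem hasIntegralRatio_radialSubst (hR : 0 < R) (hα : 0 < α) (f : ℝ → ℝ) :
    HasIntegralRatio 1
      (fun r => radialSubst R α r * (α * r ^ (-α - 1)) * f (radialSubst R α r))
      (volume.restrict (Ioi 0)) f (volume.restrict (Ioo 0 R)) := by
  have hderiv : ∀ r ∈ Ioi (0 : ℝ), HasDerivWithinAt (radialSubst R α)
      (radialSubst R α r * (α * r ^ (-α - 1))) (Ioi 0) r := fun r (hr : 0 < r) =>
    (hasDerivAt_radialSubst hr.ne').hasDerivWithinAt
  have hinj := injOn_radialSubst hR.ne' hα.ne'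
  have habs : EqOn (fun r => |radialSubst R α r * (α * r ^ (-α - 1))| • f (radialSubst R α r))
      (fun r => radialSubst R α r * (α * r ^ (-α - 1)) * f (radialSubst R α r)) (Ioi 0) := by
    intro r (hr : 0 < r)
    have hφ := radialSubst_pos (α := α) hR r
    simp only [smul_eq_mul]
    rw [abs_of_pos (by positivity)]
  rw [← image_radialSubst hR hα.ne']
  constructor
  · exact (integrableOn_congr_fun habs measurableSet_Ioi).symm.trans
      (integrableOn_image_iff_integrableOn_abs_deriv_smul measurableSet_Ioi hderiv hinj f).symm
  · rw [integral_image_eq_integral_abs_deriv_smul measurableSet_Ioi hderiv hinj,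
      setIntegral_congr_fun measurableSet_Ioi habs, one_mul]

variable {m N : ℕ} {W : ℝ → ℝ} {r : ℝ}

theorem pow_mul_rpow_pow_eq_one (hm : 0 < m) (hN : 0 < N) (hα : α * (N - 1) = m - N)
    (hr : 0 < r) : r ^ (m - 1) * (r ^ (-α - 1)) ^ (N - 1) = 1 := by
  have hexp : (m : ℝ) - 1 + (-α - 1) * ((N : ℝ) - 1) = 0 := by linarith
  rw [← Real.rpow_natCast, ← Real.rpow_natCast, ← Real.rpow_mul hr.le, ← Real.rpow_add hr,
    Nat.cast_pred hm, Nat.cast_pred hN, hexp, Real.rpow_zero]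

theorem pow_div_pow_eq_rpow_div_rpow_pow (hm : 0 < m) (hα : α * (N - 1) = m - N) (hr : 0 < r) :
    r ^ (m - 1) / r ^ N = r ^ (-α - 1) / (r ^ (-α)) ^ N := by
  rw [← Real.rpow_natCast, ← Real.rpow_natCast, ← Real.rpow_natCast (r ^ (-α)),
    ← Real.rpow_mul hr.le, ← Real.rpow_sub hr, ← Real.rpow_sub hr, Nat.cast_pred hm]
  congr 1
  linarith

theorem gradient_profile_radialSubst (hR : 0 < R) (hα : 0 < α) (hm : 0 < m) (hN : 0 < N)
    (hαmN : α * (N - 1) = m - N) (hW : DifferentiableOn ℝ W (Ioo 0 R)) (hr : 0 < r) :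
    r ^ (m - 1) * |deriv (W ∘ radialSubst R α) r| ^ N =
      α ^ (N - 1) * (radialSubst R α r * (α * r ^ (-α - 1)) *
        (radialSubst R α r ^ (N - 1) * |deriv W (radialSubst R α r)| ^ N)) := by
  set φ := radialSubst R α r
  set ρ := r ^ (-α - 1)
  have hφ : φ ∈ Ioo 0 R := radialSubst_mem_Ioo hR hr
  have hjac : 0 < φ * (α * ρ) := mul_pos hφ.1 (mul_pos hα (Real.rpow_pos_of_pos hr _))
  have hchain : deriv (W ∘ radialSubst R α) r = deriv W φ * (φ * (α * ρ)) :=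
    ((hW.differentiableAt (isOpen_Ioo.mem_nhds hφ)).hasDerivAt.comp r
      (hasDerivAt_radialSubst hr.ne')).deriv
  have hsplit : (φ * (α * ρ)) ^ N = (φ * (α * ρ)) ^ (N - 1) * (φ * (α * ρ)) :=
    (pow_sub_one_mul hN.ne' _).symm
  rw [hchain, abs_mul, mul_pow, abs_of_pos hjac, hsplit]
  calc r ^ (m - 1) * (|deriv W φ| ^ N * ((φ * (α * ρ)) ^ (N - 1) * (φ * (α * ρ))))
      = (r ^ (m - 1) * ρ ^ (N - 1)) *
          (α ^ (N - 1) * (φ * (α * ρ) * (φ ^ (N - 1) * |deriv W φ| ^ N))) := by ring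
    _ = α ^ (N - 1) * (φ * (α * ρ) * (φ ^ (N - 1) * |deriv W φ| ^ N)) := by
        rw [pow_mul_rpow_pow_eq_one hm hN hαmN hr, one_mul]

theorem hardy_profile_radialSubst (hR : 0 < R) (hα : α ≠ 0) (hm : 0 < m) (hN : 0 < N)
    (hαmN : α * (N - 1) = m - N) (hr : 0 < r) :
    r ^ (m - 1) * (|W (radialSubst R α r)| ^ N / r ^ N) =
      α⁻¹ * (radialSubst R α r * (α * r ^ (-α - 1)) * (radialSubst R α r ^ (N - 1) *
        (|W (radialSubst R α r)| ^ N /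
          (radialSubst R α r ^ N * Real.log (R / radialSubst R α r) ^ N)))) := by
  rw [log_div_radialSubst hR.ne']
  set φ := radialSubst R α r
  have hφ : 0 < φ := radialSubst_pos hR r
  have hφN : φ * φ ^ (N - 1) = φ ^ N := mul_pow_sub_one hN.ne' φ
  calc r ^ (m - 1) * (|W φ| ^ N / r ^ N)
      = |W φ| ^ N * (r ^ (m - 1) / r ^ N) := by ring
    _ = |W φ| ^ N * (r ^ (-α - 1) / (r ^ (-α)) ^ N) := by
        rw [pow_div_pow_eq_rpow_div_rpow_pow hm hαmN hr]
    _ = (α⁻¹ * α) * (φ * φ ^ (N - 1) / φ ^ N) *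
          (|W φ| ^ N * (r ^ (-α - 1) / (r ^ (-α)) ^ N)) := by
        rw [hφN, inv_mul_cancel₀ hα, div_self (by positivity), one_mul, one_mul]
    _ = α⁻¹ * (φ * (α * r ^ (-α - 1)) *
          (φ ^ (N - 1) * (|W φ| ^ N / (φ ^ N * (r ^ (-α)) ^ N)))) := by ring

theorem hasIntegralRatio_gradient_profile (hR : 0 < R) (hα : 0 < α) (hm : 0 < m) (hN : 0 < N)
    (hαmN : α * (N - 1) = m - N) (hW : DifferentiableOn ℝ W (Ioo 0 R)) :
    HasIntegralRatio (α ^ (N - 1))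
      (fun r => r ^ (m - 1) * |deriv (W ∘ radialSubst R α) r| ^ N) (volume.restrict (Ioi 0))
      (fun s => s ^ (N - 1) * |deriv W s| ^ N) (volume.restrict (Ioo 0 R)) := by
  have hprofile := (ae_restrict_mem (μ := volume) measurableSet_Ioi).mono fun r (hr : 0 < r) =>
    gradient_profile_radialSubst hR hα hm hN hαmN hW hr
  simpa only [mul_one] using
    (hasIntegralRatio_of_ae_eq_mul (pow_ne_zero _ hα.ne') hprofile).trans
      (hasIntegralRatio_radialSubst hR hα fun s => s ^ (N - 1) * |deriv W s| ^ N)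

theorem hasIntegralRatio_hardy_profile (hR : 0 < R) (hα : 0 < α) (hm : 0 < m) (hN : 0 < N)
    (hαmN : α * (N - 1) = m - N) (W : ℝ → ℝ) :
    HasIntegralRatio α⁻¹
      (fun r => r ^ (m - 1) * (|W (radialSubst R α r)| ^ N / r ^ N)) (volume.restrict (Ioi 0))
      (fun s => s ^ (N - 1) * (|W s| ^ N / (s ^ N * Real.log (R / s) ^ N)))
      (volume.restrict (Ioo 0 R)) := by
  have hprofile := (ae_restrict_mem (μ := volume) measurableSet_Ioi).mono fun r (hr : 0 < r) =>
    hardy_profile_radialSubst (W := W) hR hα.ne' hm hN hαmN hr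
  simpa only [mul_one] using
    (hasIntegralRatio_of_ae_eq_mul (inv_ne_zero hα.ne') hprofile).trans
      (hasIntegralRatio_radialSubst hR hα
        fun s => s ^ (N - 1) * (|W s| ^ N / (s ^ N * Real.log (R / s) ^ N)))

end RadialSubst

section Comparison

open Module

variable {E F : Type*} [NormedAddCommGroup E] [NormedSpace ℝ E] [FiniteDimensional ℝ E]
  [Nontrivial E] [MeasurableSpace E] [BorelSpace E] [NormedAddCommGroup F] [NormedSpace ℝ F]
  [FiniteDimensional ℝ F] [Nontrivial F] [MeasurableSpace F] [BorelSpace F] (μ : Measure E)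
  [μ.IsAddHaarMeasure] (ν : Measure F) [ν.IsAddHaarMeasure] {g : E → ℝ} {k : F → ℝ} {R α : ℝ}
  {W : ℝ → ℝ} {u : E → ℝ} {w : F → ℝ}

theorem hasIntegralRatio_gradient_term (hg : IsGauge g) (hgd : ∀ᵐ x ∂μ, DifferentiableAt ℝ g x)
    (hk : IsGauge k) (hkd : ∀ᵐ y ∂ν, DifferentiableAt ℝ k y) (hR : 0 < R) (hα : 0 < α)
    (hαdim : α * (finrank ℝ F - 1) = finrank ℝ E - finrank ℝ F)
    (hW : DifferentiableOn ℝ W (Ioo 0 R)) (hw : ∀ y, y ≠ 0 → w y = W (k y))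
    (hu : ∀ x, x ≠ 0 → u x = W (radialSubst R α (g x))) :
    HasIntegralRatio (finrank ℝ E * μ.real {x | g x < 1} * α ^ (finrank ℝ F - 1) *
        (finrank ℝ F * ν.real {y | k y < 1})⁻¹)
      (fun x => |fderiv ℝ u x ((g x)⁻¹ • x)| ^ finrank ℝ F) μ
      (fun y => |fderiv ℝ w y ((k y)⁻¹ • y)| ^ finrank ℝ F) (ν.restrict {y | k y < R}) := by
  have hWd : ∀ s ∈ Ioo 0 R, DifferentiableAt ℝ W s := fun s hs =>
    hW.differentiableAt (isOpen_Ioo.mem_nhds hs)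
  have hUd : ∀ r ∈ univ ∩ Ioi 0, DifferentiableAt ℝ (W ∘ radialSubst R α) r := fun r hr =>
    (hWd _ (radialSubst_mem_Ioo hR hr.2)).comp r
      (hasDerivAt_radialSubst (ne_of_gt hr.2)).differentiableAt
  have hE := hg.hasIntegralRatio_abs_fderiv_radial_pow μ hgd .univ hUd hu (finrank ℝ F)
  have hF := hk.hasIntegralRatio_abs_fderiv_radial_pow ν hkd measurableSet_Iio
    (fun s hs => hWd s ⟨hs.2, hs.1⟩) hw (finrank ℝ F)
  rw [preimage_univ, Measure.restrict_univ, univ_inter] at hE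
  rw [Iio_inter_Ioi] at hF
  have hprofile := hasIntegralRatio_gradient_profile hR hα finrank_pos finrank_pos hαdim hW
  have hF0 : (finrank ℝ F : ℝ) * ν.real {y | k y < 1} ≠ 0 :=
    mul_ne_zero (Nat.cast_ne_zero.2 finrank_pos.ne') (hk.measureReal_lt_one_ne_zero ν)
  exact (hE.trans hprofile).trans (hF.symm hF0)

theorem hasIntegralRatio_hardy_term (hg : IsGauge g) (hk : IsGauge k) (hR : 0 < R) (hα : 0 < α)
    (hαdim : α * (finrank ℝ F - 1) = finrank ℝ E - finrank ℝ F)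
    (hW : ContinuousOn W (Ioo 0 R)) (hw : ∀ y, y ≠ 0 → w y = W (k y))
    (hu : ∀ x, x ≠ 0 → u x = W (radialSubst R α (g x))) :
    HasIntegralRatio (finrank ℝ E * μ.real {x | g x < 1} * α⁻¹ *
        (finrank ℝ F * ν.real {y | k y < 1})⁻¹)
      (fun x => |u x| ^ finrank ℝ F / g x ^ finrank ℝ F) μ
      (fun y => |w y| ^ finrank ℝ F / (k y ^ finrank ℝ F * Real.log (R / k y) ^ finrank ℝ F))
      (ν.restrict {y | k y < R}) := by
  have hU : ContinuousOn (W ∘ radialSubst R α) (Ioi 0) :=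
    hW.comp (fun r (hr : 0 < r) => (hasDerivAt_radialSubst hr.ne').continuousAt.continuousWithinAt)
      fun r hr => radialSubst_mem_Ioo hR hr
  have hUm : AEMeasurable (W ∘ radialSubst R α) (volume.restrict (univ ∩ Ioi 0)) := by
    rw [univ_inter]
    exact hU.aemeasurable measurableSet_Ioi
  have hWm : AEMeasurable W (volume.restrict (Iio R ∩ Ioi 0)) := by
    rw [Iio_inter_Ioi]
    exact hW.aemeasurable measurableSet_Ioo
  have hE := hg.hasIntegralRatio_of_ae_eq_comp μ .univ
    (F := fun x => |u x| ^ finrank ℝ F / g x ^ finrank ℝ F)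
    (f := fun r => |W (radialSubst R α r)| ^ finrank ℝ F / r ^ finrank ℝ F)
    ((hUm.norm.pow_const _).div (by fun_prop)).aestronglyMeasurable
    ((ae_restrict_of_ae (Measure.ae_ne μ 0)).mono fun x hx => by
      simp only [hu x hx, Function.comp_apply])
  have hF := hk.hasIntegralRatio_of_ae_eq_comp ν measurableSet_Iio
    (F := fun y => |w y| ^ finrank ℝ F / (k y ^ finrank ℝ F * Real.log (R / k y) ^ finrank ℝ F))
    (f := fun s => |W s| ^ finrank ℝ F / (s ^ finrank ℝ F * Real.log (R / s) ^ finrank ℝ F))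
    ((hWm.norm.pow_const _).div (by fun_prop)).aestronglyMeasurable
    ((ae_restrict_of_ae (Measure.ae_ne ν 0)).mono fun y hy => by
      simp only [hw y hy, Function.comp_apply])
  rw [preimage_univ, Measure.restrict_univ, univ_inter] at hE
  rw [Iio_inter_Ioi] at hF
  have hprofile := hasIntegralRatio_hardy_profile hR hα finrank_pos finrank_pos hαdim W
  have hF0 : (finrank ℝ F : ℝ) * ν.real {y | k y < 1} ≠ 0 :=
    mul_ne_zero (Nat.cast_ne_zero.2 finrank_pos.ne') (hk.measureReal_lt_one_ne_zero ν)
  exact (hE.trans hprofile).trans (hF.symm hF0)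

end Comparison

section PolarNorm

variable {n : ℕ} {G : Euc n → ℝ} {a : ℝ}

theorem inner_div_le_of_mul_norm_le (ha : 0 < a) (hG : ∀ ξ, a * ‖ξ‖ ≤ G ξ) (x ξ : Euc n) :
    ⟪ξ, x⟫ / G ξ ≤ a⁻¹ * ‖x‖ := by
  have hGξ : 0 ≤ G ξ := (by positivity : 0 ≤ a * ‖ξ‖).trans (hG ξ)
  refine div_le_of_le_mul₀ hGξ (by positivity) ?_
  calc ⟪ξ, x⟫ ≤ ‖ξ‖ * ‖x‖ := real_inner_le_norm ξ x
    _ = a⁻¹ * ‖x‖ * (a * ‖ξ‖) := by field_simp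
    _ ≤ a⁻¹ * ‖x‖ * G ξ := by gcongr; exact hG ξ

theorem inner_div_le_polarNorm (ha : 0 < a) (hG : ∀ ξ, a * ‖ξ‖ ≤ G ξ) (x : Euc n) {ξ : Euc n}
    (hξ : ξ ≠ 0) : ⟪ξ, x⟫ / G ξ ≤ polarNorm G x := by
  refine le_csSup ⟨a⁻¹ * ‖x‖, ?_⟩ ⟨ξ, hξ, rfl⟩
  rintro _ ⟨η, -, rfl⟩
  exact inner_div_le_of_mul_norm_le ha hG x η

theorem polarNorm_le {x : Euc n} {c : ℝ} (hc : 0 ≤ c) (h : ∀ ξ, ξ ≠ 0 → ⟪ξ, x⟫ / G ξ ≤ c) :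
    polarNorm G x ≤ c := by
  refine Real.sSup_le ?_ hc
  rintro _ ⟨ξ, hξ, rfl⟩
  exact h ξ hξ

theorem polarNorm_pos (ha : 0 < a) (hG : ∀ ξ, a * ‖ξ‖ ≤ G ξ) {x : Euc n} (hx : x ≠ 0) :
    0 < polarNorm G x := by
  have hx' : 0 < ‖x‖ := norm_pos_iff.2 hx
  have hGx : 0 < G x := (mul_pos ha hx').trans_le (hG x)
  refine lt_of_lt_of_le ?_ (inner_div_le_polarNorm ha hG x hx)
  rw [real_inner_self_eq_norm_sq]
  positivity

theorem polarNorm_nonneg (ha : 0 < a) (hG : ∀ ξ, a * ‖ξ‖ ≤ G ξ) (x : Euc n) :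
    0 ≤ polarNorm G x := by
  rcases eq_or_ne x 0 with rfl | hx
  · refine Real.sSup_nonneg ?_
    rintro _ ⟨ξ, -, rfl⟩
    rw [inner_zero_right, zero_div]
  · exact (polarNorm_pos ha hG hx).le

theorem polarNorm_add_le (ha : 0 < a) (hG : ∀ ξ, a * ‖ξ‖ ≤ G ξ) (x y : Euc n) :
    polarNorm G (x + y) ≤ polarNorm G x + polarNorm G y := by
  refine polarNorm_le (add_nonneg (polarNorm_nonneg ha hG x) (polarNorm_nonneg ha hG y))
    fun ξ hξ => ?_
  rw [inner_add_right, add_div]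
  exact add_le_add (inner_div_le_polarNorm ha hG x hξ) (inner_div_le_polarNorm ha hG y hξ)

open scoped Pointwise in
theorem polarNorm_smul_of_nonneg (G : Euc n → ℝ) {t : ℝ} (ht : 0 ≤ t) (x : Euc n) :
    polarNorm G (t • x) = t * polarNorm G x := by
  have hset : {r : ℝ | ∃ ξ : Euc n, ξ ≠ 0 ∧ r = ⟪ξ, t • x⟫ / G ξ} =
      t • {r : ℝ | ∃ ξ : Euc n, ξ ≠ 0 ∧ r = ⟪ξ, x⟫ / G ξ} := by
    ext r
    simp only [mem_smul_set, mem_ofPred_eq, inner_smul_right, mul_div_assoc, smul_eq_mul]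
    constructor
    · rintro ⟨ξ, hξ, rfl⟩
      exact ⟨_, ⟨ξ, hξ, rfl⟩, rfl⟩
    · rintro ⟨_, ⟨ξ, hξ, rfl⟩, rfl⟩
      exact ⟨ξ, hξ, rfl⟩
  rw [polarNorm, hset, Real.sSup_smul_of_nonneg ht, smul_eq_mul, polarNorm]

theorem lipschitzWith_polarNorm (ha : 0 < a) (hG : ∀ ξ, a * ‖ξ‖ ≤ G ξ) :
    LipschitzWith a⁻¹.toNNReal (polarNorm G) := by
  refine LipschitzWith.of_le_add_mul _ fun x y => ?_
  rw [Real.coe_toNNReal _ (inv_pos.2 ha).le, dist_eq_norm]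
  calc polarNorm G x = polarNorm G (y + (x - y)) := by rw [add_sub_cancel]
    _ ≤ polarNorm G y + polarNorm G (x - y) := polarNorm_add_le ha hG _ _
    _ ≤ polarNorm G y + a⁻¹ * ‖x - y‖ := by
        gcongr
        exact polarNorm_le (by positivity) fun ξ _ => inner_div_le_of_mul_norm_le ha hG _ ξ

theorem IsFinslerNorm.isGauge_polarNorm (hG : IsFinslerNorm G) : IsGauge (polarNorm G) := by
  obtain ⟨a, _, ha, -, hbounds⟩ := hG.bounds
  have hle : ∀ ξ, a * ‖ξ‖ ≤ G ξ := fun ξ => (hbounds ξ).1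
  exact ⟨fun x hx => polarNorm_pos ha hle hx, fun t x ht => polarNorm_smul_of_nonneg G ht.le x,
    (lipschitzWith_polarNorm ha hle).continuous⟩

theorem IsFinslerNorm.ae_differentiableAt_polarNorm (hG : IsFinslerNorm G) :
    ∀ᵐ x, DifferentiableAt ℝ (polarNorm G) x := by
  obtain ⟨a, _, ha, -, hbounds⟩ := hG.bounds
  exact (lipschitzWith_polarNorm ha fun ξ => (hbounds ξ).1).ae_differentiableAt

end PolarNorm

open Module in
theorem finsler_subcritical_to_critical_relation_general
    {E F : Type*} [NormedAddCommGroup E] [NormedSpace ℝ E] [FiniteDimensional ℝ E]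
    [MeasurableSpace E] [BorelSpace E] [NormedAddCommGroup F] [NormedSpace ℝ F]
    [FiniteDimensional ℝ F] [MeasurableSpace F] [BorelSpace F]
    (μ : Measure E) [μ.IsAddHaarMeasure] (ν : Measure F) [ν.IsAddHaarMeasure]
    {m N : ℕ} (hE : finrank ℝ E = m) (hF : finrank ℝ F = N) (hN : 2 ≤ N) (hmN : N < m)
    {g : E → ℝ} (hg : IsGauge g) (hgd : ∀ᵐ x ∂μ, DifferentiableAt ℝ g x)
    {k : F → ℝ} (hk : IsGauge k) (hkd : ∀ᵐ y ∂ν, DifferentiableAt ℝ k y)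
    {R : ℝ} (hR : 0 < R) {W : ℝ → ℝ} (hW : DifferentiableOn ℝ W (Ioo 0 R))
    {α : ℝ} (hα : α = ((m : ℝ) - N) / ((N : ℝ) - 1))
    {w : F → ℝ} (hw : ∀ y, y ≠ 0 → w y = W (k y))
    {u : E → ℝ} (hu : ∀ x, x ≠ 0 → u x = W (radialSubst R α (g x)))
    (hIA : Integrable (fun x => |fderiv ℝ u x ((g x)⁻¹ • x)| ^ N) μ)
    (hIB : Integrable (fun x => |u x| ^ N / g x ^ N) μ) :
    IntegrableOn (fun y => |fderiv ℝ w y ((k y)⁻¹ • y)| ^ N) {y | k y < R} ν ∧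
    IntegrableOn (fun y => |w y| ^ N / (k y ^ N * Real.log (R / k y) ^ N)) {y | k y < R} ν ∧
    (∫ x, |fderiv ℝ u x ((g x)⁻¹ • x)| ^ N ∂μ)
        - (((m : ℝ) - N) / N) ^ N * ∫ x, |u x| ^ N / g x ^ N ∂μ
      = ((m * μ.real {x | g x < 1}) / (N * ν.real {y | k y < 1})) *
          (((m : ℝ) - N) / ((N : ℝ) - 1)) ^ (N - 1) *
          ((∫ y in {y | k y < R}, |fderiv ℝ w y ((k y)⁻¹ • y)| ^ N ∂ν)
            - (((N : ℝ) - 1) / N) ^ N *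
                ∫ y in {y | k y < R}, |w y| ^ N / (k y ^ N * Real.log (R / k y) ^ N) ∂ν) := by
  subst hE hF
  have : Nontrivial E := nontrivial_of_finrank_pos (R := ℝ) (by omega)
  have : Nontrivial F := nontrivial_of_finrank_pos (R := ℝ) (by omega)
  have hN1 : 0 < (finrank ℝ F : ℝ) - 1 := sub_pos.2 (by exact_mod_cast hN)
  have hαpos : 0 < α := hα ▸ div_pos (sub_pos.2 (by exact_mod_cast hmN)) hN1
  have hαdim : α * (finrank ℝ F - 1) = finrank ℝ E - finrank ℝ F :=
    (eq_div_iff hN1.ne').1 hα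
  have hgrad := hasIntegralRatio_gradient_term μ ν hg hgd hk hkd hR hαpos hαdim hW hw hu
  have hhardy := hasIntegralRatio_hardy_term μ ν hg hk hR hαpos hαdim hW.continuousOn hw hu
  refine ⟨hgrad.integrable_iff.1 hIA, hhardy.integrable_iff.1 hIB, ?_⟩
  have hαpow : α ^ finrank ℝ F * α⁻¹ = α ^ (finrank ℝ F - 1) := by
    rw [← pow_sub_one_mul (by omega : finrank ℝ F ≠ 0) α, mul_inv_cancel_right₀ hαpos.ne']
  rw [hgrad.integral_eq, hhardy.integral_eq, ← hα, ← hαdim, mul_div_assoc, mul_pow, ← hαpow]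
  ring

/-- Relation between the subcritical anisotropic Hardy inequality on ℝ^m and the
critical anisotropic Hardy inequality on the Wulff ball of radius R in ℝ^N, via
the radial substitution s = R exp(-r^{-α}), α = (m-N)/(N-1). -/
theorem finsler_subcritical_to_critical_relation
    (m N : ℕ) (hN : 2 ≤ N) (hmN : N < m)
    (H : Euc m → ℝ) (hH : IsFinslerNorm H)
    (K : Euc N → ℝ) (hK : IsFinslerNorm K)
    (R : ℝ) (hR : 0 < R)
    (W : ℝ → ℝ) (hW : ContDiffOn ℝ 1 W (Ioo 0 R))
    (α : ℝ) (hα : α = ((m : ℝ) - (N : ℝ)) / ((N : ℝ) - 1))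
    (w : Euc N → ℝ) (hw : ∀ y : Euc N, y ≠ 0 → w y = W (polarNorm K y))
    (U : ℝ → ℝ) (hU : ∀ r : ℝ, U r = W (R * Real.exp (-(r ^ (-α)))))
    (u : Euc m → ℝ) (hu : ∀ x : Euc m, x ≠ 0 → u x = U (polarNorm H x))
    (hIA : Integrable (fun x : Euc m => |⟪(polarNorm H x)⁻¹ • x, gradient u x⟫| ^ N))
    (hIB : Integrable (fun x : Euc m => |u x| ^ N / polarNorm H x ^ N))
    (hJA : IntegrableOn (fun y : Euc N => |⟪(polarNorm K y)⁻¹ • y, gradient w y⟫| ^ N)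
        {y : Euc N | polarNorm K y < R})
    (hJB : IntegrableOn (fun y : Euc N => |w y| ^ N /
          (polarNorm K y ^ N * Real.log (R / polarNorm K y) ^ N))
        {y : Euc N | polarNorm K y < R}) :
    (∫ x : Euc m, |⟪(polarNorm H x)⁻¹ • x, gradient u x⟫| ^ N)
        - (((m : ℝ) - (N : ℝ)) / (N : ℝ)) ^ N *
            ∫ x : Euc m, |u x| ^ N / polarNorm H x ^ N
      = (((m : ℝ) * (volume {x : Euc m | polarNorm H x < 1}).toReal) /
            ((N : ℝ) * (volume {y : Euc N | polarNorm K y < 1}).toReal)) *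
          (((m : ℝ) - (N : ℝ)) / ((N : ℝ) - 1)) ^ (N - 1) *
          ((∫ y in {y : Euc N | polarNorm K y < R},
              |⟪(polarNorm K y)⁻¹ • y, gradient w y⟫| ^ N)
            - (((N : ℝ) - 1) / (N : ℝ)) ^ N *
                ∫ y in {y : Euc N | polarNorm K y < R},
                  |w y| ^ N /
                    (polarNorm K y ^ N * Real.log (R / polarNorm K y) ^ N)) := by
  simp only [inner_gradient_right, conj_trivial] at hIA ⊢
  exact (finsler_subcritical_to_critical_relation_general volume volume finrank_euclideanSpace_fin
    finrank_euclideanSpace_fin hN hmN hH.isGauge_polarNorm hH.ae_differentiableAt_polarNorm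
    hK.isGauge_polarNorm hK.ae_differentiableAt_polarNorm hR (hW.differentiableOn one_ne_zero) hα
    hw (fun x hx => (hu x hx).trans (hU _)) hIA hIB).2.2
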